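/- (The Lawson–Osserman cone is minimal) Identify ℝ⁴ with ℂ² via z = (z₁, z₂) and ℝ³ with ℝ × ℂ, and define u : ℝ⁴ ∖ {0} → ℝ³ by u(z) = (√5 / (2|z|)) · (|z₁|² − |z₂|², −2i z₁ z₂), where |z|² = |z₁|² + |z₂|². Then u solves the minimal surface system at every point z ≠ 0: with g(z) = I₄ + (Du(z))ᵀ Du(z) and (g^{ij}) = g⁻¹, one has ∑_{i,j} g^{ij}(z) ∂ᵢ∂ⱼu^α(z) = 0 for α = 1, 2, 3. -/

import Mathlib

open Real Matrix

/-- The Lawson–Osserman map `u(z) = (√5/(2|z|)) (|z₁|² − |z₂|², −2i z₁ z₂)`,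
where `ℝ⁴ ≅ ℂ²` via `z₁ = x₀ + i x₁`, `z₂ = x₂ + i x₃`, and `ℝ³ ≅ ℝ × ℂ`
(the last two components are the real and imaginary parts of `−2i z₁ z₂`). -/
noncomputable def lawsonOsserman (z : EuclideanSpace ℝ (Fin 4)) :
    EuclideanSpace ℝ (Fin 3) :=
  (EuclideanSpace.equiv (Fin 3) ℝ).symm
    ![Real.sqrt 5 / (2 * ‖z‖) * (z 0 ^ 2 + z 1 ^ 2 - z 2 ^ 2 - z 3 ^ 2),
      Real.sqrt 5 / (2 * ‖z‖) * (2 * (z 0 * z 3 + z 1 * z 2)),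
      Real.sqrt 5 / (2 * ‖z‖) * (-2 * (z 0 * z 2 - z 1 * z 3))]

/-- Jacobian matrix of a map `u : ℝⁿ → ℝᵐ` at `x`. -/
noncomputable def jacobianMatrix {n m : ℕ}
    (u : EuclideanSpace ℝ (Fin n) → EuclideanSpace ℝ (Fin m))
    (x : EuclideanSpace ℝ (Fin n)) : Matrix (Fin m) (Fin n) ℝ :=
  Matrix.of fun α i => fderiv ℝ (fun y => u y α) x (EuclideanSpace.single i 1)

/-- The induced metric `g = Iₙ + (Du)ᵀ Du` of the graph of `u`. -/
noncomputable def inducedMetric {n m : ℕ}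
    (u : EuclideanSpace ℝ (Fin n) → EuclideanSpace ℝ (Fin m))
    (x : EuclideanSpace ℝ (Fin n)) : Matrix (Fin n) (Fin n) ℝ :=
  (1 : Matrix (Fin n) (Fin n) ℝ) + (jacobianMatrix u x)ᵀ * jacobianMatrix u x

/-!
Each component of the map is `c ⟪x, A x⟫ / ‖x‖` for a symmetric matrix `A`, and the three matrices
`P α` square to `1` and pairwise anticommute. At a unit vector `x` the vectors `P α x` are therefore
orthonormal; let `Π` be the projection onto their span. Since the Hopf map has norm one on the unit
sphere, `Π x = x`, and the induced metric is `1 + 4c² Π - 3c² x xᵀ`. Its inverse is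
`1 - 4c²/(1 + 4c²) Π + t x xᵀ` for some `t`. With `q = ⟪x, P α x⟫`, `n` variables and `m`
components, the Hessian of a component, up to the factor `c`, has trace `-(n + 1) q`, trace
`-3(m - 1) q` against `Π` (because `P β P α P β = -P α` for `β ≠ α`), and vanishes on `(x, x)`. The
trace of the Hessian against the inverse metric thus vanishes when
`4c²/(1 + 4c²) = (n + 1)/(3(m - 1))`, which for `n = 4` and `m = 3` says `4c² = 5`.
-/

-- In coordinates write `(ν x).ofLp`: `ν x.ofLp` would normalize in the sup norm.
local notation "ν" => NormedSpace.normalize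

section Calculus

variable {E : Type*} [NormedAddCommGroup E] [InnerProductSpace ℝ E] {x : E}

lemma hasFDerivAt_inv_norm (hx : x ≠ 0) :
    HasFDerivAt (fun y : E => ‖y‖⁻¹) (-(‖x‖⁻¹ ^ 2) • innerSL ℝ (ν x)) x := by
  have hnorm : ‖x‖ ≠ 0 := norm_ne_zero_iff.mpr hx
  have hsqrt := (hasStrictFDerivAt_norm_sq x).hasFDerivAt.sqrt (pow_ne_zero 2 hnorm)
  simp only [Real.sqrt_sq (norm_nonneg _)] at hsqrt
  refine ((hasDerivAt_inv hnorm).comp_hasFDerivAt x hsqrt).congr_fderiv ?_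
  ext v
  simp only [one_div, _root_.mul_inv_rev, smul_smul, neg_mul, neg_smul, _root_.neg_apply,
    _root_.smul_apply, coe_innerSL_apply, nsmul_eq_mul, Nat.cast_ofNat, smul_eq_mul, inv_pow,
    NormedSpace.normalize, map_smul, neg_inj]
  ring

lemma hasFDerivAt_normalize (hx : x ≠ 0) :
    HasFDerivAt (ν : E → E) (‖x‖⁻¹ • (.id ℝ E - (innerSL ℝ (ν x)).smulRight (ν x))) x := by
  refine ((hasFDerivAt_inv_norm hx).smul (hasFDerivAt_id x)).congr_fderiv ?_
  ext v
  simp only [inv_pow, NormedSpace.normalize, map_smul, smul_smul, neg_mul, neg_smul, id_eq,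
    _root_.add_apply, _root_.smul_apply, ContinuousLinearMap.id_apply,
    ContinuousLinearMap.smulRight_apply, _root_.neg_apply, coe_innerSL_apply, smul_eq_mul,
    sub_eq_add_neg, smul_add, smul_neg, add_right_inj, neg_inj]
  ring_nf

variable {T : E →L[ℝ] E}

lemma fderiv_inner_apply_self_div_norm (hT : (T : E →ₗ[ℝ] E).IsSymmetric) (hx : x ≠ 0) (v : E) :
    fderiv ℝ (fun y => inner ℝ y (T y) / ‖y‖) x v =
      2 * inner ℝ v (T (ν x)) - inner ℝ (ν x) (T (ν x)) * inner ℝ v (ν x) := by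
  have hfun : (fun y => inner ℝ y (T y) / ‖y‖) = fun y => inner ℝ (ν y) (T y) := by
    ext y
    rw [NormedSpace.normalize, real_inner_smul_left, div_eq_inv_mul]
  have hsymm : inner ℝ (ν x) (T v) = inner ℝ v (T (ν x)) := by
    rw [real_inner_comm]; exact hT v _
  have hscale : T (ν x) = ‖x‖⁻¹ • T x := map_smul T _ _
  rw [hfun, ((hasFDerivAt_normalize hx).inner ℝ T.hasFDerivAt).fderiv]
  simp only [ContinuousLinearMap.comp_apply, ContinuousLinearMap.prod_apply, _root_.smul_apply,
    _root_.sub_apply, ContinuousLinearMap.id_apply, ContinuousLinearMap.smulRight_apply,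
    coe_innerSL_apply, fderivInnerCLM_apply, hsymm, real_inner_smul_left, inner_sub_left]
  rw [real_inner_comm v (ν x), hscale, real_inner_smul_right, real_inner_smul_right]
  ring

lemma fderiv_fderiv_inner_apply_self_div_norm (hT : (T : E →ₗ[ℝ] E).IsSymmetric) (hx : x ≠ 0)
    (v w : E) :
    fderiv ℝ (fun y => fderiv ℝ (fun y => inner ℝ y (T y) / ‖y‖) y w) x v =
      ‖x‖⁻¹ * (2 * inner ℝ v (T w)
        - 2 * (inner ℝ v (T (ν x)) * inner ℝ w (ν x) + inner ℝ v (ν x) * inner ℝ w (T (ν x)))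
        - inner ℝ (ν x) (T (ν x)) * inner ℝ v w
        + 3 * inner ℝ (ν x) (T (ν x)) * (inner ℝ v (ν x) * inner ℝ w (ν x))) := by
  have hgrad : (fun y => fderiv ℝ (fun y => inner ℝ y (T y) / ‖y‖) y w) =ᶠ[nhds x]
      fun y => 2 * inner ℝ w (T (ν y)) - inner ℝ (ν y) (T (ν y)) * inner ℝ w (ν y) := by
    filter_upwards [isOpen_ne.mem_nhds hx] with y hy
    exact fderiv_inner_apply_self_div_norm hT hy w
  have hsymm (a b : E) : inner ℝ a (T b) = inner ℝ b (T a) := by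
    rw [real_inner_comm]; exact hT b a
  have hn : HasFDerivAt (ν : E → E) _ x := hasFDerivAt_normalize hx
  have hTn : HasFDerivAt (fun y => T (ν y)) _ x := T.hasFDerivAt.comp x hn
  have hw : HasFDerivAt (fun _ : E => w) (0 : E →L[ℝ] E) x := hasFDerivAt_const w x
  rw [hgrad.fderiv_eq, (((hw.inner ℝ hTn).const_mul 2).fun_sub
    ((hn.inner ℝ hTn).fun_mul (hw.inner ℝ hn))).fderiv]
  simp only [ContinuousLinearMap.comp_apply, ContinuousLinearMap.prod_apply, _root_.zero_apply,
    _root_.add_apply, _root_.sub_apply, _root_.smul_apply, ContinuousLinearMap.id_apply,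
    ContinuousLinearMap.smulRight_apply, coe_innerSL_apply, fderivInnerCLM_apply, map_smul, map_sub,
    smul_eq_mul, inner_zero_left, add_zero, real_inner_smul_left, real_inner_smul_right,
    inner_sub_left, inner_sub_right, hsymm w v, hsymm _ v]
  rw [real_inner_comm v (ν x), real_inner_comm v w]
  ring

end Calculus

lemma one_add_smul_add_smul_mul_eq_one {K R : Type*} [Field K] [Ring R] [Algebra K R] {p q : R}
    {a b : K} (hp : IsIdempotentElem p) (hq : IsIdempotentElem q) (hpq : p * q = q)
    (hqp : q * p = q) (ha : 1 + a ≠ 0) (hab : 1 + a + b ≠ 0) :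
    (1 + a • p + b • q) *
      (1 + ((1 + a)⁻¹ - 1) • p + ((1 + a + b)⁻¹ - (1 + a)⁻¹) • q) = 1 := by
  simp only [add_mul, mul_add, smul_mul_assoc, mul_smul_comm, one_mul, mul_one, hp.eq, hq.eq,
    hpq, hqp]
  match_scalars <;> field_simp <;> ring

section LinearAlgebra

variable {ι κ : Type*} [Fintype ι]

lemma dotProduct_mulVec_of_isSymm {R : Type*} [CommSemiring R] {A : Matrix ι ι R} (hA : A.IsSymm)
    (v w : ι → R) : v ⬝ᵥ A *ᵥ w = A *ᵥ v ⬝ᵥ w := by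
  rw [dotProduct_mulVec, ← mulVec_transpose, hA.eq]

lemma trace_mul_vecMulVec {R : Type*} [CommSemiring R] (A : Matrix ι ι R) (v w : ι → R) :
    (A * vecMulVec v w).trace = w ⬝ᵥ A *ᵥ v := by
  rw [mul_vecMulVec, trace_vecMulVec, dotProduct_comm]

lemma trace_vecMulVec_mul {R : Type*} [CommSemiring R] (A : Matrix ι ι R) (v w : ι → R) :
    (vecMulVec v w * A).trace = w ⬝ᵥ A *ᵥ v := by
  rw [trace_mul_comm, trace_mul_vecMulVec]

/-- The gradient at a unit vector `x` of `y ↦ ⟪y, A y⟫ / ‖y‖`, for `A` symmetric. -/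
def normalizedGradient (A : Matrix ι ι ℝ) (x : ι → ℝ) : ι → ℝ :=
  (2 : ℝ) • A *ᵥ x - (x ⬝ᵥ A *ᵥ x) • x

/-- The Hessian at a unit vector `x` of `y ↦ ⟪y, A y⟫ / ‖y‖`, for `A` symmetric. -/
def normalizedHessian [DecidableEq ι] (A : Matrix ι ι ℝ) (x : ι → ℝ) : Matrix ι ι ℝ :=
  (2 : ℝ) • A - (2 : ℝ) • (vecMulVec (A *ᵥ x) x + vecMulVec x (A *ᵥ x))
    - (x ⬝ᵥ A *ᵥ x) • 1 + (3 * (x ⬝ᵥ A *ᵥ x)) • vecMulVec x x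

lemma isSymm_normalizedHessian [DecidableEq ι] {A : Matrix ι ι ℝ} (hA : A.IsSymm) (x : ι → ℝ) :
    (normalizedHessian A x).IsSymm := by
  simp [normalizedHessian, IsSymm, transpose_vecMulVec, hA.eq, add_comm]

lemma trace_mul_normalizedHessian [DecidableEq ι] {A B : Matrix ι ι ℝ} (hB : B.IsSymm)
    (x : ι → ℝ) :
    (B * normalizedHessian A x).trace =
      2 * (B * A).trace - 4 * (B *ᵥ x ⬝ᵥ A *ᵥ x) - (x ⬝ᵥ A *ᵥ x) * B.trace
        + 3 * (x ⬝ᵥ A *ᵥ x) * (x ⬝ᵥ B *ᵥ x) := by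
  simp only [normalizedHessian, mul_add, mul_sub, mul_smul_comm, trace_add, trace_sub, trace_smul,
    trace_mul_vecMulVec, mul_one, smul_eq_mul, dotProduct_mulVec_of_isSymm hB x (A *ᵥ x),
    dotProduct_comm (A *ᵥ x) (B *ᵥ x)]
  ring

lemma trace_vecMulVec_self_mul_normalizedHessian [DecidableEq ι] (A : Matrix ι ι ℝ) {x : ι → ℝ}
    (hx : x ⬝ᵥ x = 1) : (vecMulVec x x * normalizedHessian A x).trace = 0 := by
  rw [trace_mul_normalizedHessian (transpose_vecMulVec x x), trace_vecMulVec_mul, vecMulVec_mulVec,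
    trace_vecMulVec, hx]
  simp only [MulOpposite.op_one, one_smul, hx]
  ring

/-- A Clifford system in the sense of Ferus, Karcher and Münzner: symmetric orthogonal matrices
that pairwise anticommute. -/
structure IsCliffordSystem [DecidableEq ι] (P : κ → Matrix ι ι ℝ) : Prop where
  isSymm (α : κ) : (P α).IsSymm
  mul_self (α : κ) : P α * P α = 1
  anticomm {α β : κ} (h : α ≠ β) : P α * P β = -(P β * P α)

/-- The orthogonal projection onto the span of the vectors `P α x`, for a Clifford system `P` and a
unit vector `x`. -/
def frameProjection [Fintype κ] (P : κ → Matrix ι ι ℝ) (x : ι → ℝ) : Matrix ι ι ℝ :=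
  ∑ α, vecMulVec (P α *ᵥ x) (P α *ᵥ x)

section frameProjection

variable [Fintype κ] (P : κ → Matrix ι ι ℝ) (x : ι → ℝ)

lemma isSymm_frameProjection : (frameProjection P x).IsSymm := by
  simp [frameProjection, IsSymm, transpose_sum, transpose_vecMulVec]

lemma frameProjection_mulVec (v : ι → ℝ) :
    frameProjection P x *ᵥ v = ∑ α, (P α *ᵥ x ⬝ᵥ v) • P α *ᵥ x := by
  simp [frameProjection, sum_mulVec, vecMulVec_mulVec]

end frameProjection

namespace IsCliffordSystem

variable [DecidableEq ι] {P : κ → Matrix ι ι ℝ} {x : ι → ℝ}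

lemma mulVec_dotProduct_mulVec_self (hP : IsCliffordSystem P) (α : κ) (v : ι → ℝ) :
    P α *ᵥ v ⬝ᵥ P α *ᵥ v = v ⬝ᵥ v := by
  rw [← dotProduct_mulVec_of_isSymm (hP.isSymm α), mulVec_mulVec, hP.mul_self, one_mulVec]

lemma mulVec_dotProduct_mulVec_of_ne (hP : IsCliffordSystem P) {α β : κ} (h : α ≠ β) (v : ι → ℝ) :
    P α *ᵥ v ⬝ᵥ P β *ᵥ v = 0 := by
  have hneg : P α *ᵥ v ⬝ᵥ P β *ᵥ v = -(P β *ᵥ v ⬝ᵥ P α *ᵥ v) := by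
    simp only [← dotProduct_mulVec_of_isSymm (hP.isSymm _), mulVec_mulVec, hP.anticomm h,
      neg_mulVec, dotProduct_neg]
  rw [dotProduct_comm (P β *ᵥ v)] at hneg
  linarith

lemma trace_eq_zero (hP : IsCliffordSystem P) [Nontrivial κ] (α : κ) : (P α).trace = 0 := by
  obtain ⟨β, hβ⟩ := exists_ne α
  have hneg : (P α).trace = -(P α).trace :=
    calc (P α).trace = (P β * (P β * P α)).trace := by rw [← mul_assoc, hP.mul_self, one_mul]
      _ = -(P β * (P α * P β)).trace := by rw [hP.anticomm hβ, mul_neg, trace_neg]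
      _ = -(P α).trace := by rw [trace_mul_comm, mul_assoc, hP.mul_self, mul_one]
  linarith

lemma trace_normalizedHessian (hP : IsCliffordSystem P) [Nontrivial κ] (hx : x ⬝ᵥ x = 1) (α : κ) :
    (normalizedHessian (P α) x).trace = -(Fintype.card ι + 1) * (x ⬝ᵥ P α *ᵥ x) := by
  have h := trace_mul_normalizedHessian (A := P α) isSymm_one x
  rw [one_mul, one_mul, hP.trace_eq_zero, one_mulVec, trace_one, hx] at h
  rw [h]
  ring

lemma mulVec_dotProduct_mulVec_mulVec_of_ne (hP : IsCliffordSystem P) {α β : κ} (h : α ≠ β)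
    (v : ι → ℝ) : P β *ᵥ v ⬝ᵥ P α *ᵥ P β *ᵥ v = -(v ⬝ᵥ P α *ᵥ v) := by
  rw [mulVec_mulVec, hP.anticomm h, neg_mulVec, ← mulVec_mulVec, dotProduct_neg,
    ← dotProduct_mulVec_of_isSymm (hP.isSymm β), mulVec_mulVec, mulVec_mulVec, hP.mul_self, one_mul]

variable [Fintype κ]

lemma frameProjection_mulVec_mulVec (hP : IsCliffordSystem P) (hx : x ⬝ᵥ x = 1) (α : κ) :
    frameProjection P x *ᵥ P α *ᵥ x = P α *ᵥ x := by
  rw [frameProjection_mulVec, Finset.sum_eq_single_of_mem α (Finset.mem_univ α),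
    hP.mulVec_dotProduct_mulVec_self, hx, one_smul]
  intro β _ hβ
  rw [hP.mulVec_dotProduct_mulVec_of_ne hβ, zero_smul]

lemma isIdempotentElem_frameProjection (hP : IsCliffordSystem P) (hx : x ⬝ᵥ x = 1) :
    IsIdempotentElem (frameProjection P x) :=
  calc frameProjection P x * frameProjection P x
      = ∑ α, vecMulVec (frameProjection P x *ᵥ P α *ᵥ x) (P α *ᵥ x) := by
        nth_rewrite 2 [frameProjection]
        simp only [Finset.mul_sum, mul_vecMulVec]
    _ = frameProjection P x := by
        simp only [hP.frameProjection_mulVec_mulVec hx]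
        rfl

lemma trace_frameProjection (hP : IsCliffordSystem P) (hx : x ⬝ᵥ x = 1) :
    (frameProjection P x).trace = Fintype.card κ := by
  simp [frameProjection, trace_sum, trace_vecMulVec, hP.mulVec_dotProduct_mulVec_self, hx]

lemma trace_frameProjection_mul (hP : IsCliffordSystem P) (α : κ) :
    (frameProjection P x * P α).trace = (2 - Fintype.card κ) * (x ⬝ᵥ P α *ᵥ x) := by
  classical
  have hterm (β : κ) : P β *ᵥ x ⬝ᵥ P α *ᵥ P β *ᵥ x =
      (if β = α then 2 * (x ⬝ᵥ P α *ᵥ x) else 0) - x ⬝ᵥ P α *ᵥ x := by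
    split_ifs with h
    · rw [h, mulVec_mulVec, hP.mul_self, one_mulVec, dotProduct_comm]
      ring
    · rw [hP.mulVec_dotProduct_mulVec_mulVec_of_ne (Ne.symm h), zero_sub]
  simp only [frameProjection, Finset.sum_mul, trace_sum, trace_vecMulVec_mul, hterm,
    Finset.sum_sub_distrib, Finset.sum_ite_eq', Finset.mem_univ, if_true, Finset.sum_const,
    Finset.card_univ, nsmul_eq_mul]
  ring

end IsCliffordSystem

/-- A Clifford system whose quadratic forms are the components of a Hopf map, i.e. for which
`x ↦ (⟪x, P α x⟫)_α` sends the unit sphere to the unit sphere; `sum_sq` is the homogeneous form of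
this condition. -/
structure IsHopfSystem [Fintype κ] [DecidableEq ι] (P : κ → Matrix ι ι ℝ) : Prop
    extends IsCliffordSystem P where
  sum_sq (x : ι → ℝ) : ∑ α, (x ⬝ᵥ P α *ᵥ x) ^ 2 = (x ⬝ᵥ x) ^ 2

namespace IsHopfSystem

variable [Fintype κ] [DecidableEq ι] {P : κ → Matrix ι ι ℝ} {x : ι → ℝ}

-- The residual `r = x - Π x` satisfies `|r|² = ⟪r, x⟫ = |x|² - ∑ ⟪x, P α x⟫² = 0`.
lemma frameProjection_mulVec_self (hP : IsHopfSystem P) (hx : x ⬝ᵥ x = 1) :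
    frameProjection P x *ᵥ x = x := by
  have hproj : frameProjection P x *ᵥ frameProjection P x *ᵥ x = frameProjection P x *ᵥ x := by
    rw [mulVec_mulVec, (hP.isIdempotentElem_frameProjection hx).eq]
  have hdot : x ⬝ᵥ frameProjection P x *ᵥ x = 1 := by
    simpa [frameProjection_mulVec, dotProduct_sum, dotProduct_comm _ x, ← sq, hx]
      using hP.sum_sq x
  have hres : (x - frameProjection P x *ᵥ x) ⬝ᵥ (x - frameProjection P x *ᵥ x) = 0 := by
    rw [dotProduct_sub, sub_dotProduct, sub_dotProduct,
      dotProduct_comm (frameProjection P x *ᵥ x) x,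
      ← dotProduct_mulVec_of_isSymm (isSymm_frameProjection P x), hproj, hdot, hx]
    ring
  exact (sub_eq_zero.mp (dotProduct_self_eq_zero.mp hres)).symm

lemma sum_vecMulVec_normalizedGradient (hP : IsHopfSystem P) (hx : x ⬝ᵥ x = 1) :
    ∑ α, vecMulVec (normalizedGradient (P α) x) (normalizedGradient (P α) x) =
      (4 : ℝ) • frameProjection P x - (3 : ℝ) • vecMulVec x x := by
  ext i j
  have hfix (k : ι) : ∑ α, (x ⬝ᵥ P α *ᵥ x) * (P α *ᵥ x) k = x k := by
    simpa [frameProjection_mulVec, dotProduct_comm _ x]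
      using congrFun (hP.frameProjection_mulVec_self hx) k
  have hsq : ∑ α, (x ⬝ᵥ P α *ᵥ x) ^ 2 = 1 := by rw [hP.sum_sq, hx, one_pow]
  have hterm (α : κ) :
      normalizedGradient (P α) x i * normalizedGradient (P α) x j =
        4 * ((P α *ᵥ x) i * (P α *ᵥ x) j) - 2 * ((x ⬝ᵥ P α *ᵥ x) * (P α *ᵥ x) i * x j)
          - 2 * ((x ⬝ᵥ P α *ᵥ x) * (P α *ᵥ x) j * x i)
          + (x ⬝ᵥ P α *ᵥ x) ^ 2 * (x i * x j) := by
    simp only [normalizedGradient, Pi.sub_apply, Pi.smul_apply, smul_eq_mul]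
    ring
  simp only [Matrix.sum_apply, Matrix.sub_apply, Matrix.smul_apply, vecMulVec_apply,
    frameProjection, smul_eq_mul, hterm, Finset.sum_add_distrib, Finset.sum_sub_distrib,
    ← Finset.mul_sum, ← Finset.sum_mul, hfix, hsq]
  ring

lemma trace_frameProjection_mul_normalizedHessian (hP : IsHopfSystem P) (hx : x ⬝ᵥ x = 1) (α : κ) :
    (frameProjection P x * normalizedHessian (P α) x).trace =
      (3 - 3 * Fintype.card κ) * (x ⬝ᵥ P α *ᵥ x) := by
  rw [trace_mul_normalizedHessian (isSymm_frameProjection P x), hP.trace_frameProjection_mul,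
    hP.frameProjection_mulVec_self hx, hP.trace_frameProjection hx, hx]
  ring

lemma trace_mul_normalizedHessian_eq_zero (hP : IsHopfSystem P) [Nontrivial κ] (hx : x ⬝ᵥ x = 1)
    {s : ℝ} (hs : s * (3 - 3 * Fintype.card κ) = Fintype.card ι + 1) (t : ℝ) (α : κ) :
    ((1 + s • frameProjection P x + t • vecMulVec x x) *
      normalizedHessian (P α) x).trace = 0 := by
  rw [add_mul, add_mul, trace_add, trace_add, one_mul, smul_mul_assoc, smul_mul_assoc, trace_smul,
    trace_smul, hP.trace_normalizedHessian hx, hP.trace_frameProjection_mul_normalizedHessian hx,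
    trace_vecMulVec_self_mul_normalizedHessian _ hx, smul_eq_mul, smul_eq_mul]
  linear_combination (x ⬝ᵥ P α *ᵥ x) * hs

end IsHopfSystem

end LinearAlgebra

section EuclideanSpace

variable {ι : Type*} [Fintype ι]

lemma isSymmetric_toEuclideanCLM [DecidableEq ι] {A : Matrix ι ι ℝ} (hA : A.IsSymm) :
    ((toEuclideanCLM (𝕜 := ℝ) A : _ →L[ℝ] _) :
      EuclideanSpace ℝ ι →ₗ[ℝ] EuclideanSpace ℝ ι).IsSymmetric :=
  isSymmetric_toEuclideanLin_iff.mpr (by rwa [IsHermitian, conjTranspose_eq_transpose_of_trivial])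

lemma normalize_dotProduct_normalize {x : EuclideanSpace ℝ ι} (hx : x ≠ 0) :
    (ν x).ofLp ⬝ᵥ (ν x).ofLp = 1 := by
  have h := real_inner_self_eq_norm_sq (ν x)
  rwa [EuclideanSpace.inner_eq_star_dotProduct, star_trivial, NormedSpace.norm_normalize hx,
    one_pow] at h

end EuclideanSpace

section Cone

variable {m n : ℕ} {P : Fin m → Matrix (Fin n) (Fin n) ℝ} {c : ℝ} {x : EuclideanSpace ℝ (Fin n)}

/-- The degree-one homogeneous map `x ↦ (c / ‖x‖) (⟪x, P α x⟫)_α`, whose graph is a cone. It is the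
map of Lawson and Osserman when the forms `⟪x, P α x⟫` are the components of a Hopf map. -/
noncomputable def quadraticConeMap (c : ℝ) (P : Fin m → Matrix (Fin n) (Fin n) ℝ)
    (x : EuclideanSpace ℝ (Fin n)) : EuclideanSpace ℝ (Fin m) :=
  WithLp.toLp 2 fun α => c * ((x ⬝ᵥ P α *ᵥ x) / ‖x‖)

lemma quadraticConeMap_apply_eq_smul_inner (c : ℝ) (P : Fin m → Matrix (Fin n) (Fin n) ℝ)
    (α : Fin m) :
    (fun x => quadraticConeMap c P x α) =
      c • fun x => inner ℝ x (toEuclideanCLM (𝕜 := ℝ) (P α) x) / ‖x‖ := by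
  ext x
  rw [Pi.smul_apply, inner_toEuclideanCLM, quadraticConeMap, smul_eq_mul]

lemma jacobianMatrix_quadraticConeMap (hP : ∀ α, (P α).IsSymm) (hx : x ≠ 0) (α : Fin m)
    (i : Fin n) :
    jacobianMatrix (quadraticConeMap c P) x α i = c * normalizedGradient (P α) (ν x).ofLp i := by
  rw [jacobianMatrix, Matrix.of_apply, quadraticConeMap_apply_eq_smul_inner,
    fderiv_const_smul_field, Pi.smul_apply, _root_.smul_apply,
    fderiv_inner_apply_self_div_norm (isSymmetric_toEuclideanCLM (hP α)) hx]
  simp [normalizedGradient, inner_toEuclideanCLM, EuclideanSpace.inner_single_left]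

lemma fderiv_fderiv_quadraticConeMap (hP : ∀ α, (P α).IsSymm) (hx : x ≠ 0) (α : Fin m)
    (i j : Fin n) :
    fderiv ℝ (fun y => fderiv ℝ (fun w => quadraticConeMap c P w α) y
      (EuclideanSpace.single j 1)) x (EuclideanSpace.single i 1) =
      c * ‖x‖⁻¹ * normalizedHessian (P α) (ν x).ofLp i j := by
  have hscale : (fun y => fderiv ℝ (fun w => quadraticConeMap c P w α) y
      (EuclideanSpace.single j 1)) = c • fun y =>
        fderiv ℝ (fun w => inner ℝ w (toEuclideanCLM (𝕜 := ℝ) (P α) w) / ‖w‖) y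
          (EuclideanSpace.single j 1) := by
    rw [quadraticConeMap_apply_eq_smul_inner, fderiv_const_smul_field]
    rfl
  rw [hscale, fderiv_const_smul_field, Pi.smul_apply, _root_.smul_apply,
    fderiv_fderiv_inner_apply_self_div_norm (isSymmetric_toEuclideanCLM (hP α)) hx]
  simp only [EuclideanSpace.inner_single_left, ringHom_apply, ofLp_toEuclideanCLM, PiLp.ofLp_single,
    mulVec_single, MulOpposite.op_one, Pi.smul_apply, col_apply, one_smul, one_mul,
    inner_toEuclideanCLM, PiLp.single_apply, mul_ite, mul_one, mul_zero, smul_eq_mul,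
    normalizedHessian, smul_add, Matrix.add_apply, Matrix.sub_apply, Matrix.smul_apply,
    vecMulVec_apply, Matrix.one_apply]
  ring

lemma jacobianMatrix_transpose_mul_self_quadraticConeMap (hP : ∀ α, (P α).IsSymm) (hx : x ≠ 0) :
    (jacobianMatrix (quadraticConeMap c P) x)ᵀ * jacobianMatrix (quadraticConeMap c P) x =
      c ^ 2 • ∑ α, vecMulVec (normalizedGradient (P α) (ν x).ofLp)
        (normalizedGradient (P α) (ν x).ofLp) := by
  ext i j
  simp only [mul_apply, transpose_apply, jacobianMatrix_quadraticConeMap hP hx, Matrix.smul_apply,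
    Matrix.sum_apply, vecMulVec_apply, smul_eq_mul, Finset.mul_sum]
  exact Finset.sum_congr rfl fun α _ => by ring

lemma inducedMetric_quadraticConeMap (hP : IsHopfSystem P) (hx : x ≠ 0) :
    inducedMetric (quadraticConeMap c P) x =
      1 + (4 * c ^ 2) • frameProjection P (ν x).ofLp
        + (-3 * c ^ 2) • vecMulVec (ν x).ofLp (ν x).ofLp := by
  rw [inducedMetric, jacobianMatrix_transpose_mul_self_quadraticConeMap hP.isSymm hx,
    hP.sum_vecMulVec_normalizedGradient (normalize_dotProduct_normalize hx)]
  module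

lemma inv_inducedMetric_quadraticConeMap (hP : IsHopfSystem P) (hx : x ≠ 0) :
    (inducedMetric (quadraticConeMap c P) x)⁻¹ =
      1 + ((1 + 4 * c ^ 2)⁻¹ - 1) • frameProjection P (ν x).ofLp
        + ((1 + c ^ 2)⁻¹ - (1 + 4 * c ^ 2)⁻¹) •
          vecMulVec (ν x).ofLp (ν x).ofLp := by
  have hunit : (ν x).ofLp ⬝ᵥ (ν x).ofLp = 1 := normalize_dotProduct_normalize hx
  have hfix := hP.frameProjection_mulVec_self hunit
  have hsum : 1 + c ^ 2 = 1 + 4 * c ^ 2 + -3 * c ^ 2 := by ring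
  rw [inducedMetric_quadraticConeMap hP hx, hsum]
  apply inv_eq_right_inv
  apply one_add_smul_add_smul_mul_eq_one (hP.isIdempotentElem_frameProjection hunit)
  · rw [IsIdempotentElem, vecMulVec_mul_vecMulVec, hunit, one_smul]
  · rw [mul_vecMulVec, hfix]
  · rw [vecMulVec_mul, ← mulVec_transpose, (isSymm_frameProjection _ _).eq, hfix]
  · positivity
  · rw [← hsum]
    positivity

/-- For the Hopf maps `ℝ²ᵏ → ℝᵏ⁺¹`, `k = 2, 4, 8`, the condition `hc` reads
`c² = (2k + 1) / (4(k - 1))`. -/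
theorem lawson_osserman_minimal_general (hP : IsHopfSystem P)
    (hc : 4 * c ^ 2 * (3 * m - n - 4) = n + 1) (hx : x ≠ 0) (α : Fin m) :
    ∑ i, ∑ j, (inducedMetric (quadraticConeMap c P) x)⁻¹ i j *
      fderiv ℝ (fun y => fderiv ℝ (fun w => quadraticConeMap c P w α) y
        (EuclideanSpace.single j 1)) x (EuclideanSpace.single i 1) = 0 := by
  have hm : 1 < m := by
    by_contra! h
    have hm_le : (m : ℝ) ≤ 1 := by exact_mod_cast h
    nlinarith [sq_nonneg c, n.cast_nonneg (α := ℝ)]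
  have : Nontrivial (Fin m) := Fin.nontrivial_iff_two_le.mpr hm
  have hs : ((1 + 4 * c ^ 2)⁻¹ - 1) * (3 - 3 * (Fintype.card (Fin m) : ℝ)) =
      (Fintype.card (Fin n) : ℝ) + 1 := by
    rw [Fintype.card_fin, Fintype.card_fin]
    field_simp
    linear_combination hc
  have htrace := hP.trace_mul_normalizedHessian_eq_zero (normalize_dotProduct_normalize hx) hs
    ((1 + c ^ 2)⁻¹ - (1 + 4 * c ^ 2)⁻¹) α
  rw [← inv_inducedMetric_quadraticConeMap hP hx,
    ← (isSymm_normalizedHessian (hP.isSymm α) _).eq, ← sum_hadamard_eq] at htrace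
  calc _ = c * ‖x‖⁻¹ * ∑ i, ∑ j, ((inducedMetric (quadraticConeMap c P) x)⁻¹ ⊙
        normalizedHessian (P α) (ν x).ofLp) i j := by
        simp only [fderiv_fderiv_quadraticConeMap hP.isSymm hx, Finset.mul_sum, hadamard_apply,
          mul_left_comm]
    _ = 0 := by rw [htrace, mul_zero]

end Cone

/-- The symmetric matrices of the quadratic forms `|z₁|² − |z₂|²`, `Re (−2i z₁ z₂)` and
`Im (−2i z₁ z₂)` on `ℝ⁴ ≅ ℂ²`. -/
def hopfMatrices : Fin 3 → Matrix (Fin 4) (Fin 4) ℝ :=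
  ![!![1, 0, 0, 0; 0, 1, 0, 0; 0, 0, -1, 0; 0, 0, 0, -1],
    !![0, 0, 0, 1; 0, 0, 1, 0; 0, 1, 0, 0; 1, 0, 0, 0],
    !![0, 0, -1, 0; 0, 0, 0, 1; -1, 0, 0, 0; 0, 1, 0, 0]]

lemma isHopfSystem_hopfMatrices : IsHopfSystem hopfMatrices where
  isSymm α := by
    ext i j
    fin_cases α <;> fin_cases i <;> fin_cases j <;> rfl
  mul_self α := by
    have hone : (1 : Matrix (Fin 4) (Fin 4) ℝ) =
        !![1, 0, 0, 0; 0, 1, 0, 0; 0, 0, 1, 0; 0, 0, 0, 1] := by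
      ext i j
      fin_cases i <;> fin_cases j <;> rfl
    fin_cases α <;> simp [hopfMatrices, hone]
  anticomm {α β} h := by
    fin_cases α <;> fin_cases β <;> simp_all [hopfMatrices]
  sum_sq x := by
    simp [hopfMatrices, dotProduct, mulVec, Fin.sum_univ_succ]
    ring

lemma lawsonOsserman_eq_quadraticConeMap :
    lawsonOsserman = quadraticConeMap (√5 / 2) hopfMatrices := by
  ext z α
  fin_cases α <;>
    simp [lawsonOsserman, quadraticConeMap, hopfMatrices, dotProduct, mulVec, Fin.sum_univ_succ] <;>
    ring

/-- The Lawson–Osserman cone is minimal: the map `u` solves the minimal surface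
system `∑ᵢⱼ gⁱʲ ∂ᵢ∂ⱼuᵅ = 0` at every point `z ≠ 0`. -/
theorem lawson_osserman_minimal :
    ∀ z : EuclideanSpace ℝ (Fin 4), z ≠ 0 → ∀ α : Fin 3,
      ∑ i, ∑ j, (inducedMetric lawsonOsserman z)⁻¹ i j *
        fderiv ℝ (fun y => fderiv ℝ (fun w => lawsonOsserman w α) y
          (EuclideanSpace.single j 1)) z (EuclideanSpace.single i 1) = 0 := by
  intro z hz α
  rw [lawsonOsserman_eq_quadraticConeMap]
  exact lawson_osserman_minimal_general isHopfSystem_hopfMatrices (by norm_num [div_pow]) hz α
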